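/- Let f_1, f_2 : ℝ² → ℝ be convex polynomial functions with f_1(0,0) = f_2(0,0) = 0, let A = {(x, y, z) ∈ ℝ³ : z ≥ f_1(x, y) and z ≥ f_2(x, y)}, and let C = {(x, y, z) ∈ ℝ³ : z = f_1(x, y) = f_2(x, y)}. Let φ : ℝ → ℝ³ be analytic at 0 with φ(s) = (α_1, α_2, 0)s + (β_1, β_2, β_3)s² + O(s³) as s → 0, where (α_1, α_2) ≠ (0,0), and φ(s) ∈ C for all s in a neighborhood of 0. Let (a, b) ∈ ℝ², B = {t·(a, b, 0) : t ∈ ℝ}, and assume the three vectors (a, b, 0), (−∂f_1/∂x(0,0), −∂f_1/∂y(0,0), 1), (−∂f_2/∂x(0,0), −∂f_2/∂y(0,0), 1) are linearly independent. Suppose (a, b, 0) = c·(α_1, α_2, 0) for some c ≠ 0, and the unique solution (λ_1, λ_2, μ) of (β_1, β_2, β_3) = λ_1(−∂f_1/∂x(0,0), −∂f_1/∂y(0,0), 1) + λ_2(−∂f_2/∂x(0,0), −∂f_2/∂y(0,0), 1) + μ(a, b, 0) satisfies λ_1 > 0 and λ_2 > 0. Then there exists ε > 0 such that P_A(p) ∈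 C for every p ∈ B with ‖p‖ < ε. -/

import Mathlib

open Filter

/-- `u` is the metric projection of `p` onto `S`. -/
def IsMetricProj {E : Type*} [NormedAddCommGroup E] (S : Set E) (p u : E) : Prop :=
  u ∈ S ∧ ∀ s ∈ S, ‖u - p‖ ≤ ‖s - p‖

/-- The point (a, b, c) of Euclidean 3-space. -/
noncomputable def e3 (a b c : ℝ) : EuclideanSpace ℝ (Fin 3) :=
  (WithLp.equiv 2 (Fin 3 → ℝ)).symm ![a, b, c]

/-! Along the curve `φ`, being the projection of `τ e` with all constraints active means
`φ(s) = τ e - ∑ cᵢ ∇gᵢ(φ(s))` with `c ≥ 0`, and by convexity this condition is also sufficient.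
The linear system for `(τ, c)` is surjective at `s = 0` and `s (1, 0) + s² (μ, λ)` solves it up to
`o(s²)`, so it has a continuous solution with `τ(s) = s + O(s²)` and
`cᵢ(s) = λᵢ s² + o(s²) ≥ 0`. By the intermediate value theorem `τ` covers a neighbourhood of `0`,
so every point of the line close to `0` projects onto the curve. -/

open Asymptotics Gradient Topology
open scoped RealInnerProductSpace

section FirstOrder

theorem add_hasFDerivAt_le_of_convexOn {E : Type*} [NormedAddCommGroup E] [NormedSpace ℝ E]
    {S : Set E} {f : E → ℝ} {f' : E →L[ℝ] ℝ} {x y : E} (hf : ConvexOn ℝ S f)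
    (hx : x ∈ S) (hy : y ∈ S) (hf' : HasFDerivAt f f' x) : f x + f' (y - x) ≤ f y := by
  have hconv := hf.comp_affineMap (AffineMap.lineMap x y)
  have hderiv : HasDerivAt (f ∘ AffineMap.lineMap x y) (f' (y - x)) (0 : ℝ) :=
    HasFDerivAt.comp_hasDerivAt 0 (by simpa using hf') AffineMap.hasDerivAt_lineMap
  have hslope := hconv.le_slope_of_hasDerivAt (x := 0) (y := 1)
    (by simpa using hx) (by simpa using hy) one_pos hderiv
  simp only [slope_def_field, Function.comp_apply, AffineMap.lineMap_apply_one,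
    AffineMap.lineMap_apply_zero, sub_zero, div_one] at hslope
  linarith

variable {E : Type*} [NormedAddCommGroup E] [InnerProductSpace ℝ E]

theorem IsMetricProj.eq_of_inner_nonneg {S : Set E} {p u w : E} (hw : IsMetricProj S p w)
    (hu : u ∈ S) (h : 0 ≤ ⟪u - p, w - u⟫) : w = u := by
  have hle : ‖w - p‖ ^ 2 ≤ ‖u - p‖ ^ 2 := by gcongr; exact hw.2 u hu
  have hexpand : ‖w - p‖ ^ 2 = ‖u - p‖ ^ 2 + 2 * ⟪u - p, w - u⟫ + ‖w - u‖ ^ 2 := by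
    rw [← norm_add_sq_real, sub_add_sub_cancel']
  have hzero : ‖w - u‖ ^ 2 = 0 := le_antisymm (by linarith) (sq_nonneg _)
  exact sub_eq_zero.1 (norm_eq_zero.1 (pow_eq_zero_iff two_ne_zero |>.1 hzero))

theorem IsMetricProj.eq_of_sub_eq_neg_sum_gradient {ι : Type*} [Fintype ι] [CompleteSpace E]
    {g : ι → E → ℝ} {p u w : E} {c : ι → ℝ} (hw : IsMetricProj {x | ∀ i, g i x ≤ 0} p w)
    (hconv : ∀ i, ConvexOn ℝ Set.univ (g i)) (hdiff : ∀ i, DifferentiableAt ℝ (g i) u)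
    (hu : ∀ i, g i u = 0) (hc : ∀ i, 0 ≤ c i) (hup : u - p = -∑ i, c i • ∇ (g i) u) :
    w = u := by
  refine hw.eq_of_inner_nonneg (fun i => (hu i).le) ?_
  have hfirst (i : ι) : ⟪∇ (g i) u, w - u⟫ ≤ 0 := by
    have := add_hasFDerivAt_le_of_convexOn (hconv i) (Set.mem_univ u) (Set.mem_univ w)
      (hdiff i).hasFDerivAt
    rw [inner_gradient_left]
    linarith [hu i, hw.1 i]
  rw [hup, inner_neg_left, sum_inner, neg_nonneg]
  refine Finset.sum_nonpos fun i _ => ?_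
  rw [real_inner_smul_left]
  exact mul_nonpos_of_nonneg_of_nonpos (hc i) (hfirst i)

end FirstOrder

section PerturbedLinearSystem

variable {𝕜 X E F : Type*} [NontriviallyNormedField 𝕜] [CompleteSpace 𝕜] [TopologicalSpace X]
  [NormedAddCommGroup E] [NormedSpace 𝕜 E] [FiniteDimensional 𝕜 E]
  [NormedAddCommGroup F] [NormedSpace 𝕜 F] {T : X → F →L[𝕜] E} {x₀ : X}

theorem exists_continuousAt_rightInverse (hT : ∀ᶠ x in 𝓝 x₀, ContinuousAt T x)
    (hsurj : Function.Surjective (T x₀)) :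
    ∃ S : X → E →L[𝕜] F, ∀ᶠ x in 𝓝 x₀, ContinuousAt S x ∧ ∀ v, T x (S x v) = v := by
  have : CompleteSpace E := FiniteDimensional.complete 𝕜 E
  obtain ⟨R, hR⟩ := (T x₀).exists_rightInverse_of_surjective (LinearMap.range_eq_top.2 hsurj)
  have hcomp : ∀ᶠ x in 𝓝 x₀, ContinuousAt (fun x => (T x).comp R) x :=
    hT.mono fun x hx => hx.clm_comp continuousAt_const
  have hunit : ∀ᶠ x in 𝓝 x₀, IsUnit ((T x).comp R) :=
    hcomp.self_of_nhds.eventually (Units.isOpen.mem_nhds (hR ▸ isUnit_one :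
      IsUnit ((T x₀).comp R)))
  refine ⟨fun x => R.comp (Ring.inverse ((T x).comp R)), ?_⟩
  filter_upwards [hcomp, hunit] with x hx hux
  constructor
  · obtain ⟨U, hU⟩ := hux
    have hinv : ContinuousAt Ring.inverse ((T x).comp R) :=
      hU ▸ NormedRing.inverse_continuousAt U
    exact continuousAt_const.clm_comp (hinv.comp (f := fun x => (T x).comp R) hx)
  · exact fun v => DFunLike.congr_fun (Ring.mul_inverse_cancel _ hux) v

theorem exists_continuousAt_solution {φ : X → E} {y : X → F} {ρ : X → ℝ}
    (hT : ∀ᶠ x in 𝓝 x₀, ContinuousAt T x) (hsurj : Function.Surjective (T x₀))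
    (hφ : ∀ᶠ x in 𝓝 x₀, ContinuousAt φ x) (hy : ∀ᶠ x in 𝓝 x₀, ContinuousAt y x)
    (happrox : (fun x => φ x - T x (y x)) =o[𝓝 x₀] ρ) :
    ∃ z : X → F, (∀ᶠ x in 𝓝 x₀, ContinuousAt z x ∧ T x (z x) = φ x) ∧
      (fun x => z x - y x) =o[𝓝 x₀] ρ := by
  obtain ⟨S, hS⟩ := exists_continuousAt_rightInverse hT hsurj
  refine ⟨fun x => y x + S x (φ x - T x (y x)), ?_, ?_⟩
  · filter_upwards [hT, hφ, hy, hS] with x hTx hφx hyx hSx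
    have := hSx.1
    exact ⟨by fun_prop, by rw [map_add, hSx.2, add_sub_cancel]⟩
  · simp only [add_sub_cancel_left]
    have hbdd : S =O[𝓝 x₀] fun _ => (1 : ℝ) := hS.self_of_nhds.1.isBigO_one ℝ
    have hprod : (fun x => ‖S x‖ * ‖φ x - T x (y x)‖) =o[𝓝 x₀] ρ := by
      simpa only [one_mul] using hbdd.norm_left.mul_isLittleO happrox.norm_left
    refine IsBigO.trans_isLittleO (.of_norm_le fun x => ?_) hprod
    exact (S x).le_opNorm _

end PerturbedLinearSystem

theorem nhds_le_map_of_hasDerivAt_pos {f : ℝ → ℝ} {f' x : ℝ}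
    (hcont : ∀ᶠ s in 𝓝 x, ContinuousAt f s) (hf : HasDerivAt f f' x) (hf' : 0 < f') :
    𝓝 (f x) ≤ map f (𝓝 x) := by
  intro U hU
  have hslope : ∀ᶠ s in 𝓝 x, s ≠ x → 0 < slope f x s :=
    eventually_nhdsWithin_iff.1 <|
      (hasDerivAt_iff_tendsto_slope.1 hf).eventually (lt_mem_nhds hf')
  obtain ⟨δ, hδ, hball⟩ := Metric.nhds_basis_closedBall.eventually_iff.1
    (hslope.and (hcont.and hU))
  rw [Real.closedBall_eq_Icc] at hball
  have hleft : f (x - δ) < f x := by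
    have hpos := (hball ⟨le_rfl, by linarith⟩).1 (by linarith)
    exact (slope_pos_iff_gt (by linarith)).1 hpos
  have hright : f x < f (x + δ) := by
    have hpos := (hball ⟨by linarith, le_rfl⟩).1 (by linarith)
    exact (slope_pos_iff (by linarith)).1 hpos
  refine mem_of_superset (Icc_mem_nhds hleft hright) ?_
  refine (intermediate_value_Icc (by linarith) fun s hs =>
    (hball hs).2.1.continuousWithinAt).trans ?_
  rintro _ ⟨s, hs, rfl⟩
  exact (hball hs).2.2

theorem eventually_nonneg_of_isLittleO_sub {X : Type*} {l : Filter X} {u ρ : X → ℝ} {c : ℝ}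
    (hc : 0 < c) (hρ : ∀ x, 0 ≤ ρ x) (h : (fun x => u x - c * ρ x) =o[l] ρ) :
    ∀ᶠ x in l, 0 ≤ u x := by
  filter_upwards [h.bound hc] with x hx
  rw [Real.norm_eq_abs, Real.norm_of_nonneg (hρ x)] at hx
  linarith [neg_le_of_abs_le hx]

theorem apply_zero_and_hasDerivAt_zero_of_isLittleO_sq {V : Type*} [NormedAddCommGroup V]
    [NormedSpace ℝ V] {f : ℝ → V} {v w : V}
    (h : (fun s => f s - s • v - s ^ 2 • w) =o[𝓝 0] fun s : ℝ => s ^ 2) :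
    f 0 = 0 ∧ HasDerivAt f v 0 := by
  have hf0 : f 0 = 0 := by simpa using h.isBigO.eq_zero_imp.self_of_nhds
  refine ⟨hf0, hasDerivAt_iff_isLittleO_nhds_zero.2 ?_⟩
  have hsq : (fun s : ℝ => s ^ 2) =o[𝓝 0] fun s => s := by
    simpa using isLittleO_pow_pow (𝕜 := ℝ) one_lt_two
  have hw : (fun s : ℝ => s ^ 2 • w) =o[𝓝 0] fun s => s := by
    simpa using hsq.smul_isBigO (isBigO_const_const w (one_ne_zero (α := ℝ)) (𝓝 0))
  simpa [hf0] using (h.trans hsq).add hw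

theorem eventually_nhdsWithin_span_singleton {V : Type*} [NormedAddCommGroup V] [NormedSpace ℝ V]
    {v : V} {P : V → Prop} (h : ∀ᶠ t : ℝ in 𝓝 0, P (t • v)) :
    ∀ᶠ p in 𝓝[Submodule.span ℝ {v}] 0, P p := by
  rcases eq_or_ne v 0 with rfl | hv
  · simpa [nhdsWithin_singleton] using h.self_of_nhds
  · have hmap := (isClosedEmbedding_smul_left (𝕜 := ℝ) hv).isInducing.map_nhds_eq 0
    rw [zero_smul] at hmap
    rw [show (Submodule.span ℝ {v} : Set V) = Set.range fun t : ℝ => t • v from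
      Set.ext fun _ => Submodule.mem_span_singleton, ← hmap]
    exact h

theorem exists_pos_forall_mem_range_smul_of_eventually {V : Type*} [NormedAddCommGroup V]
    [NormedSpace ℝ V] {u v : V} {P : V → Prop} (hu : u ∈ Submodule.span ℝ {v})
    (h : ∀ᶠ p in 𝓝[Submodule.span ℝ {v}] 0, P p) :
    ∃ ε > 0, ∀ p ∈ Set.range fun t : ℝ => t • u, ‖p‖ < ε → P p := by
  obtain ⟨ε, hε, hball⟩ := Metric.nhdsWithin_basis_ball.eventually_iff.1 h
  refine ⟨ε, hε, ?_⟩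
  rintro _ ⟨t, rfl⟩ ht
  exact hball ⟨mem_ball_zero_iff.2 ht, Submodule.smul_mem _ t hu⟩

theorem eventually_forall_contDiffAt_comp {𝕜 X V W ι : Type*} [NontriviallyNormedField 𝕜]
    [TopologicalSpace X] [NormedAddCommGroup V] [NormedSpace 𝕜 V] [NormedAddCommGroup W]
    [NormedSpace 𝕜 W] [Finite ι] {n : ℕ} {g : ι → V → W} {φ : X → V} {x₀ : X}
    (hg : ∀ i, ContDiffAt 𝕜 n (g i) (φ x₀)) (hφ : ContinuousAt φ x₀) :
    ∀ᶠ x in 𝓝 x₀, ∀ i, ContDiffAt 𝕜 n (g i) (φ x) :=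
  hφ.eventually (eventually_all.2 fun i => (hg i).eventually (by simp))

section SecondOrder

variable {E ι : Type*} [NormedAddCommGroup E] [InnerProductSpace ℝ E] [CompleteSpace E]
  [Fintype ι] {e : E} {g : ι → E → ℝ}

/-- The linear map `(τ, c) ↦ τ e - ∑ cᵢ ∇gᵢ(x)` of multipliers at `x`. For `p = τ e` and `c ≥ 0`,
the Karush–Kuhn–Tucker condition for `x`, with all constraints `gᵢ ≤ 0` active, to be the
projection of `p` reads `multiplierMap e g x (τ, c) = x`. -/
noncomputable def multiplierMap (e : E) (g : ι → E → ℝ) (x : E) : ℝ × (ι → ℝ) →L[ℝ] E :=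
  (ContinuousLinearMap.fst ℝ ℝ (ι → ℝ)).smulRight e -
    ∑ i, (ContinuousLinearMap.proj i ∘L ContinuousLinearMap.snd ℝ ℝ (ι → ℝ)).smulRight (∇ (g i) x)

theorem multiplierMap_apply (x : E) (z : ℝ × (ι → ℝ)) :
    multiplierMap e g x z = z.1 • e - ∑ i, z.2 i • ∇ (g i) x := by
  simp [multiplierMap]

theorem continuousAt_gradient {f : E → ℝ} {x : E} (hf : ContDiffAt ℝ 1 f x) :
    ContinuousAt (∇ f) x :=
  (InnerProductSpace.toDual ℝ E).symm.continuous.continuousAt.comp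
    (hf.continuousAt_fderiv one_ne_zero)

theorem continuousAt_multiplierMap {x : E} (hg : ∀ i, ContDiffAt ℝ 1 (g i) x) :
    ContinuousAt (multiplierMap e g) x := by
  refine continuousAt_const.sub (tendsto_finsetSum _ fun i _ => ?_)
  exact (ContinuousLinearMap.smulRightL ℝ (ℝ × (ι → ℝ)) E _).continuous.continuousAt.comp
    (continuousAt_gradient (hg i))

theorem multiplierMap_surjective {x : E}
    (hspan : Submodule.span ℝ (insert e (Set.range fun i => ∇ (g i) x)) = ⊤) :
    Function.Surjective (multiplierMap e g x) := by
  classical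
  refine LinearMap.range_eq_top.1 (eq_top_iff.2 (hspan ▸ Submodule.span_le.2 ?_))
  rintro _ (rfl | ⟨i, rfl⟩)
  · exact ⟨(1, 0), by simp [multiplierMap_apply]⟩
  · exact ⟨(0, -Pi.single i 1), by simp [multiplierMap_apply, Pi.single_apply]⟩

theorem isLittleO_sub_multiplierMap {φ : ℝ → E} {β : E} {lam : ι → ℝ} {μ : ℝ}
    (hT : ContinuousAt (fun s => multiplierMap e g (φ s)) 0)
    (hexp : (fun s => φ s - s • e - s ^ 2 • β) =o[𝓝 0] fun s : ℝ => s ^ 2)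
    (hβ : β = multiplierMap e g (φ 0) (μ, lam)) :
    (fun s => φ s - multiplierMap e g (φ s) (s • ((1, 0) : ℝ × (ι → ℝ)) + s ^ 2 • (μ, lam)))
      =o[𝓝 0] fun s : ℝ => s ^ 2 := by
  have hsub : (fun s => β - multiplierMap e g (φ s) (μ, lam)) =o[𝓝 0] fun _ => (1 : ℝ) := by
    rw [isLittleO_one_iff, hβ, ← sub_self (multiplierMap e g (φ 0) (μ, lam))]
    exact tendsto_const_nhds.sub (hT.clm_apply continuousAt_const)
  have hsq : (fun s : ℝ => s ^ 2 • (β - multiplierMap e g (φ s) (μ, lam)))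
      =o[𝓝 0] fun s => s ^ 2 := by
    simpa using (isBigO_refl (fun s : ℝ => s ^ 2) (𝓝 0)).smul_isLittleO hsub
  refine (hexp.add hsq).congr_left fun s => ?_
  have he : multiplierMap e g (φ s) (1, 0) = e := by simp [multiplierMap_apply]
  rw [map_add, map_smul, map_smul, he, smul_sub]
  abel

theorem exists_multipliers {φ : ℝ → E} {β : E} {lam : ι → ℝ} {μ : ℝ}
    (hg : ∀ i, ContDiffAt ℝ 1 (g i) 0) (hφ : ∀ᶠ s in 𝓝 0, ContinuousAt φ s)
    (hexp : (fun s => φ s - s • e - s ^ 2 • β) =o[𝓝 0] fun s : ℝ => s ^ 2)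
    (hspan : Submodule.span ℝ (insert e (Set.range fun i => ∇ (g i) 0)) = ⊤)
    (hβ : β = μ • e - ∑ i, lam i • ∇ (g i) 0) :
    ∃ z : ℝ → ℝ × (ι → ℝ),
      (∀ᶠ s in 𝓝 0, ContinuousAt z s ∧ multiplierMap e g (φ s) (z s) = φ s) ∧
      (fun s => z s - s • ((1, 0) : ℝ × (ι → ℝ)) - s ^ 2 • (μ, lam))
        =o[𝓝 0] fun s : ℝ => s ^ 2 := by
  have hφ0 : φ 0 = 0 := (apply_zero_and_hasDerivAt_zero_of_isLittleO_sq hexp).1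
  have hgφ := eventually_forall_contDiffAt_comp (by rwa [hφ0]) hφ.self_of_nhds
  have hT : ∀ᶠ s in 𝓝 0, ContinuousAt (fun s => multiplierMap e g (φ s)) s := by
    filter_upwards [hφ, hgφ] with s hs hgs
    exact (continuousAt_multiplierMap hgs).comp hs
  have hsurj : Function.Surjective (multiplierMap e g (φ 0)) :=
    multiplierMap_surjective (by rwa [hφ0])
  have : FiniteDimensional ℝ E := Module.Finite.of_surjective _ hsurj
  have hβT : β = multiplierMap e g (φ 0) (μ, lam) := by rw [hβ, hφ0, multiplierMap_apply]
  obtain ⟨z, hz, hzexp⟩ := exists_continuousAt_solution hT hsurj hφ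
    (.of_forall fun s => by fun_prop) (isLittleO_sub_multiplierMap hT.self_of_nhds hexp hβT)
  exact ⟨z, hz, by simpa only [sub_sub] using hzexp⟩

theorem stmt10_general {φ : ℝ → E} {β : E} {lam : ι → ℝ} {μ : ℝ}
    (hconv : ∀ i, ConvexOn ℝ Set.univ (g i)) (hg : ∀ i, ContDiffAt ℝ 1 (g i) 0)
    (hφ : ∀ᶠ s in 𝓝 0, ContinuousAt φ s)
    (hexp : (fun s => φ s - s • e - s ^ 2 • β) =o[𝓝 0] fun s : ℝ => s ^ 2)
    (hφg : ∀ᶠ s in 𝓝 0, ∀ i, g i (φ s) = 0)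
    (hspan : Submodule.span ℝ (insert e (Set.range fun i => ∇ (g i) 0)) = ⊤)
    (hβ : β = μ • e - ∑ i, lam i • ∇ (g i) 0) (hlam : ∀ i, 0 < lam i) :
    ∀ᶠ p in 𝓝[Submodule.span ℝ {e}] 0,
      ∀ w, IsMetricProj {x | ∀ i, g i x ≤ 0} p w → ∀ i, g i w = 0 := by
  obtain ⟨z, hz, hzexp⟩ := exists_multipliers hg hφ hexp hspan hβ
  have hτexp : (fun s => (z s).1 - s • (1 : ℝ) - s ^ 2 • μ) =o[𝓝 0] fun s : ℝ => s ^ 2 :=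
    ((ContinuousLinearMap.fst ℝ ℝ (ι → ℝ)).isBigO_comp _ _).trans_isLittleO hzexp
  obtain ⟨hτ0, hτ'⟩ := apply_zero_and_hasDerivAt_zero_of_isLittleO_sq hτexp
  have hnonneg (i : ι) : ∀ᶠ s in 𝓝 0, 0 ≤ (z s).2 i := by
    refine eventually_nonneg_of_isLittleO_sub (hlam i) sq_nonneg ?_
    refine (((ContinuousLinearMap.proj i ∘L ContinuousLinearMap.snd ℝ ℝ (ι → ℝ)).isBigO_comp
      _ _).trans_isLittleO hzexp).congr_left fun s => ?_
    simp [mul_comm]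
  have hφ0 : φ 0 = 0 := (apply_zero_and_hasDerivAt_zero_of_isLittleO_sq hexp).1
  have hgφ := eventually_forall_contDiffAt_comp (by rwa [hφ0]) hφ.self_of_nhds
  have hline := nhds_le_map_of_hasDerivAt_pos
    (hz.mono fun s hs => hs.1.fst) hτ' one_pos
  rw [hτ0] at hline
  refine eventually_nhdsWithin_span_singleton (hline (mem_map.2 ?_))
  filter_upwards [hz, hgφ, hφg, eventually_all.2 hnonneg] with s hzs hgs hφs hnn w hw
  have hkkt : φ s - (z s).1 • e = -∑ i, (z s).2 i • ∇ (g i) (φ s) := by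
    rw [← sub_eq_zero, sub_neg_eq_add, sub_add, ← multiplierMap_apply, hzs.2, sub_self]
  rw [hw.eq_of_sub_eq_neg_sum_gradient hconv (fun i => (hgs i).differentiableAt one_ne_zero)
    hφs hnn hkkt]
  exact hφs

end SecondOrder

section Epigraph

theorem hasFDerivAt_mvPolynomial_eval {𝕜 σ : Type*} [NontriviallyNormedField 𝕜] [Fintype σ]
    (p : MvPolynomial σ 𝕜) (x : σ → 𝕜) :
    HasFDerivAt (fun v => MvPolynomial.eval v p)
      (∑ i, MvPolynomial.eval x (MvPolynomial.pderiv i p) •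
        (ContinuousLinearMap.proj i : (σ → 𝕜) →L[𝕜] 𝕜)) x := by
  classical
  induction p using MvPolynomial.induction_on with
  | C r =>
    simp only [MvPolynomial.eval_C]
    refine (hasFDerivAt_const r x).congr_fderiv ?_
    ext v
    simp
  | add p q hp hq =>
    simp only [map_add]
    refine (hp.add hq).congr_fderiv ?_
    ext v
    simp [add_mul, Finset.sum_add_distrib]
  | mul_X p i hp =>
    simp only [map_mul, MvPolynomial.eval_X]
    refine (hp.mul (hasFDerivAt_apply i x)).congr_fderiv ?_
    ext v
    simp [MvPolynomial.pderiv_X, Pi.single_apply, Finset.mul_sum, add_mul,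
      Finset.sum_add_distrib, apply_ite, mul_assoc]

/-- The projection `(x, y, z) ↦ (x, y)`, with values in the domain of polynomial evaluation. -/
noncomputable def planeProj : EuclideanSpace ℝ (Fin 3) →L[ℝ] (Fin 2 → ℝ) :=
  ContinuousLinearMap.pi ![EuclideanSpace.proj 0, EuclideanSpace.proj 1]

theorem planeProj_apply (p : EuclideanSpace ℝ (Fin 3)) : planeProj p = ![p 0, p 1] := by
  ext i; fin_cases i <;> rfl

/-- The constraint function `f(x, y) - z`, which is nonpositive exactly on the epigraph of `f` and
vanishes exactly on its graph. -/
noncomputable def epigraphConstraint (f : MvPolynomial (Fin 2) ℝ)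
    (p : EuclideanSpace ℝ (Fin 3)) : ℝ :=
  MvPolynomial.eval (planeProj p) f - EuclideanSpace.proj (𝕜 := ℝ) 2 p

theorem epigraphConstraint_apply (f : MvPolynomial (Fin 2) ℝ) (p : EuclideanSpace ℝ (Fin 3)) :
    epigraphConstraint f p = MvPolynomial.eval ![p 0, p 1] f - p 2 := by
  rw [epigraphConstraint, planeProj_apply, PiLp.proj_apply]

theorem forall_epigraphConstraint_nonpos_iff {f₁ f₂ : MvPolynomial (Fin 2) ℝ}
    {p : EuclideanSpace ℝ (Fin 3)} :
    (∀ i, epigraphConstraint (![f₁, f₂] i) p ≤ 0) ↔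
      MvPolynomial.eval ![p 0, p 1] f₁ ≤ p 2 ∧ MvPolynomial.eval ![p 0, p 1] f₂ ≤ p 2 := by
  simp [Fin.forall_fin_two, epigraphConstraint_apply]

theorem forall_epigraphConstraint_eq_zero_iff {f₁ f₂ : MvPolynomial (Fin 2) ℝ}
    {p : EuclideanSpace ℝ (Fin 3)} :
    (∀ i, epigraphConstraint (![f₁, f₂] i) p = 0) ↔
      p 2 = MvPolynomial.eval ![p 0, p 1] f₁ ∧ p 2 = MvPolynomial.eval ![p 0, p 1] f₂ := by
  simp only [Fin.forall_fin_two, epigraphConstraint_apply, sub_eq_zero, Matrix.cons_val_zero,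
    Matrix.cons_val_one, eq_comm (a := p 2)]

theorem convexOn_epigraphConstraint {f : MvPolynomial (Fin 2) ℝ}
    (hf : ConvexOn ℝ Set.univ fun v => MvPolynomial.eval v f) :
    ConvexOn ℝ Set.univ (epigraphConstraint f) :=
  (hf.comp_linearMap planeProj.toLinearMap).sub
    ((EuclideanSpace.proj (𝕜 := ℝ) (2 : Fin 3)).toLinearMap.concaveOn convex_univ)

theorem contDiff_epigraphConstraint (f : MvPolynomial (Fin 2) ℝ) {n : WithTop ℕ∞} :
    ContDiff ℝ n (epigraphConstraint f) :=
  ((AnalyticOnNhd.eval_mvPolynomial f).contDiff.comp planeProj.contDiff).sub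
    (EuclideanSpace.proj (𝕜 := ℝ) (2 : Fin 3)).contDiff

theorem gradient_epigraphConstraint (f : MvPolynomial (Fin 2) ℝ) (p : EuclideanSpace ℝ (Fin 3)) :
    ∇ (epigraphConstraint f) p =
      -e3 (-MvPolynomial.eval (planeProj p) (MvPolynomial.pderiv 0 f))
        (-MvPolynomial.eval (planeProj p) (MvPolynomial.pderiv 1 f)) 1 := by
  have hderiv : HasFDerivAt (epigraphConstraint f) _ p :=
    ((hasFDerivAt_mvPolynomial_eval f (planeProj p)).comp p planeProj.hasFDerivAt).sub
      (EuclideanSpace.proj (𝕜 := ℝ) (2 : Fin 3)).hasFDerivAt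
  refine (hasGradientAt_iff_hasFDerivAt.2 (hderiv.congr_fderiv ?_)).gradient
  ext v
  simp [e3, planeProj_apply, PiLp.inner_apply, Fin.sum_univ_three, mul_comm, add_comm,
    sub_eq_add_neg]

theorem span_range_toLp_eq_top {n : ℕ} {v : Fin n → Fin n → ℝ} (hv : LinearIndependent ℝ v) :
    Submodule.span ℝ (Set.range fun i => WithLp.toLp 2 (v i)) = ⊤ := by
  have h := hv.map' (WithLp.linearEquiv 2 ℝ (Fin n → ℝ)).symm.toLinearMap (LinearEquiv.ker _)
  exact h.span_eq_top_of_card_eq_finrank' (by simp)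

theorem smul_e3 (t a b c : ℝ) : t • e3 a b c = e3 (t * a) (t * b) (t * c) := by
  ext i; fin_cases i <;> rfl

theorem isLittleO_e3 {X : Type*} {l : Filter X} {u₁ u₂ u₃ ρ : X → ℝ}
    (h₁ : u₁ =o[l] ρ) (h₂ : u₂ =o[l] ρ) (h₃ : u₃ =o[l] ρ) :
    (fun x => e3 (u₁ x) (u₂ x) (u₃ x)) =o[l] ρ := by
  have hpi : (fun x => ![u₁ x, u₂ x, u₃ x]) =o[l] ρ := by
    rw [isLittleO_pi, Fin.forall_fin_succ, Fin.forall_fin_two]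
    exact ⟨h₁, h₂, h₃⟩
  exact ((EuclideanSpace.equiv (Fin 3) ℝ).symm.isBigO_comp _ l).trans_isLittleO hpi

theorem continuousAt_e3 {X : Type*} [TopologicalSpace X] {u₁ u₂ u₃ : X → ℝ} {x : X}
    (h₁ : ContinuousAt u₁ x) (h₂ : ContinuousAt u₂ x) (h₃ : ContinuousAt u₃ x) :
    ContinuousAt (fun x => e3 (u₁ x) (u₂ x) (u₃ x)) x := by
  have hpi : ContinuousAt (fun x => ![u₁ x, u₂ x, u₃ x]) x := by
    rw [continuousAt_pi, Fin.forall_fin_succ, Fin.forall_fin_two]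
    exact ⟨h₁, h₂, h₃⟩
  exact (EuclideanSpace.equiv (Fin 3) ℝ).symm.continuous.continuousAt.comp hpi

theorem isLittleO_e3_sub_sub {φ₁ φ₂ φ₃ : ℝ → ℝ} {α₁ α₂ β₁ β₂ β₃ : ℝ}
    (h₁ : (fun s => φ₁ s - α₁ * s - β₁ * s ^ 2) =O[𝓝 0] fun s : ℝ => s ^ 3)
    (h₂ : (fun s => φ₂ s - α₂ * s - β₂ * s ^ 2) =O[𝓝 0] fun s : ℝ => s ^ 3)
    (h₃ : (fun s => φ₃ s - β₃ * s ^ 2) =O[𝓝 0] fun s : ℝ => s ^ 3) :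
    (fun s => e3 (φ₁ s) (φ₂ s) (φ₃ s) - s • e3 α₁ α₂ 0 - s ^ 2 • e3 β₁ β₂ β₃)
      =o[𝓝 0] fun s : ℝ => s ^ 2 := by
  have hcube : (fun s : ℝ => s ^ 3) =o[𝓝 0] fun s => s ^ 2 := isLittleO_pow_pow (by norm_num)
  refine (isLittleO_e3 (h₁.trans_isLittleO hcube) (h₂.trans_isLittleO hcube)
    (h₃.trans_isLittleO hcube)).congr_left fun s => ?_
  ext i
  fin_cases i <;> simp [e3, mul_comm]

theorem span_insert_gradient_epigraphConstraint_eq_top {f₁ f₂ : MvPolynomial (Fin 2) ℝ}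
    {a b c : ℝ}
    (hLI : LinearIndependent ℝ
      ![(![c * a, c * b, 0] : Fin 3 → ℝ),
        ![-MvPolynomial.eval (0 : Fin 2 → ℝ) (MvPolynomial.pderiv 0 f₁),
          -MvPolynomial.eval (0 : Fin 2 → ℝ) (MvPolynomial.pderiv 1 f₁), 1],
        ![-MvPolynomial.eval (0 : Fin 2 → ℝ) (MvPolynomial.pderiv 0 f₂),
          -MvPolynomial.eval (0 : Fin 2 → ℝ) (MvPolynomial.pderiv 1 f₂), 1]]) :
    Submodule.span ℝ
      (insert (e3 a b 0) (Set.range fun i => ∇ (epigraphConstraint (![f₁, f₂] i)) 0)) = ⊤ := by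
  set W := Submodule.span ℝ
    (insert (e3 a b 0) (Set.range fun i => ∇ (epigraphConstraint (![f₁, f₂] i)) 0))
  have hline : c • e3 a b 0 ∈ W :=
    W.smul_mem c (Submodule.subset_span (Set.mem_insert _ _))
  have hnormal (i : Fin 2) : -∇ (epigraphConstraint (![f₁, f₂] i)) 0 ∈ W :=
    W.neg_mem (Submodule.subset_span (.inr ⟨i, rfl⟩))
  simp only [gradient_epigraphConstraint, map_zero, neg_neg] at hnormal
  rw [smul_e3, mul_zero] at hline
  rw [eq_top_iff, ← span_range_toLp_eq_top hLI, Submodule.span_le, Set.range_subset_iff,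
    Fin.forall_fin_succ, Fin.forall_fin_two]
  exact ⟨hline, hnormal 0, hnormal 1⟩

theorem e3_eq_smul_sub_sum_gradient_epigraphConstraint {f₁ f₂ : MvPolynomial (Fin 2) ℝ}
    {a b c β₁ β₂ β₃ lam₁ lam₂ μ : ℝ}
    (hβ : β₁ = lam₁ * (-MvPolynomial.eval (0 : Fin 2 → ℝ) (MvPolynomial.pderiv 0 f₁)) +
            lam₂ * (-MvPolynomial.eval (0 : Fin 2 → ℝ) (MvPolynomial.pderiv 0 f₂)) + μ * (c * a) ∧
          β₂ = lam₁ * (-MvPolynomial.eval (0 : Fin 2 → ℝ) (MvPolynomial.pderiv 1 f₁)) +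
            lam₂ * (-MvPolynomial.eval (0 : Fin 2 → ℝ) (MvPolynomial.pderiv 1 f₂)) + μ * (c * b) ∧
          β₃ = lam₁ + lam₂) :
    e3 β₁ β₂ β₃ = (μ * c) • e3 a b 0 -
      ∑ i, ![lam₁, lam₂] i • ∇ (epigraphConstraint (![f₁, f₂] i)) 0 := by
  obtain ⟨rfl, rfl, rfl⟩ := hβ
  simp only [gradient_epigraphConstraint, map_zero]
  ext i
  fin_cases i <;> simp [e3, mul_assoc, add_comm, sub_eq_add_neg]

end Epigraph

theorem stmt10 (f₁ f₂ : MvPolynomial (Fin 2) ℝ)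
    (hconv₁ : ConvexOn ℝ Set.univ (fun v : Fin 2 → ℝ => MvPolynomial.eval v f₁))
    (hconv₂ : ConvexOn ℝ Set.univ (fun v : Fin 2 → ℝ => MvPolynomial.eval v f₂))
    (h₁0 : MvPolynomial.eval (0 : Fin 2 → ℝ) f₁ = 0)
    (h₂0 : MvPolynomial.eval (0 : Fin 2 → ℝ) f₂ = 0)
    (A : Set (EuclideanSpace ℝ (Fin 3)))
    (hA : A = {p | MvPolynomial.eval ![p 0, p 1] f₁ ≤ p 2 ∧
                   MvPolynomial.eval ![p 0, p 1] f₂ ≤ p 2})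
    (C : Set (EuclideanSpace ℝ (Fin 3)))
    (hC : C = {p | p 2 = MvPolynomial.eval ![p 0, p 1] f₁ ∧
                   p 2 = MvPolynomial.eval ![p 0, p 1] f₂})
    (φ₁ φ₂ φ₃ : ℝ → ℝ)
    (hφa₁ : AnalyticAt ℝ φ₁ 0) (hφa₂ : AnalyticAt ℝ φ₂ 0) (hφa₃ : AnalyticAt ℝ φ₃ 0)
    (α₁ α₂ β₁ β₂ β₃ : ℝ) (hα : (α₁, α₂) ≠ (0, 0))
    (hexp₁ : (fun s : ℝ => φ₁ s - α₁ * s - β₁ * s ^ 2) =O[nhds 0] fun s : ℝ => s ^ 3)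
    (hexp₂ : (fun s : ℝ => φ₂ s - α₂ * s - β₂ * s ^ 2) =O[nhds 0] fun s : ℝ => s ^ 3)
    (hexp₃ : (fun s : ℝ => φ₃ s - β₃ * s ^ 2) =O[nhds 0] fun s : ℝ => s ^ 3)
    (hφC : ∀ᶠ s in nhds (0 : ℝ), e3 (φ₁ s) (φ₂ s) (φ₃ s) ∈ C)
    (a b : ℝ) (B : Set (EuclideanSpace ℝ (Fin 3)))
    (hB : B = Set.range (fun t : ℝ => t • e3 a b 0))
    (hLI : LinearIndependent ℝ
      ![(![a, b, 0] : Fin 3 → ℝ),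
        ![-MvPolynomial.eval (0 : Fin 2 → ℝ) (MvPolynomial.pderiv 0 f₁),
          -MvPolynomial.eval (0 : Fin 2 → ℝ) (MvPolynomial.pderiv 1 f₁), 1],
        ![-MvPolynomial.eval (0 : Fin 2 → ℝ) (MvPolynomial.pderiv 0 f₂),
          -MvPolynomial.eval (0 : Fin 2 → ℝ) (MvPolynomial.pderiv 1 f₂), 1]])
    (hpar : ∃ c : ℝ, c ≠ 0 ∧ a = c * α₁ ∧ b = c * α₂)
    (hsol : ∃ lam₁ lam₂ μ : ℝ,
      (β₁ = lam₁ * (-MvPolynomial.eval (0 : Fin 2 → ℝ) (MvPolynomial.pderiv 0 f₁)) +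
            lam₂ * (-MvPolynomial.eval (0 : Fin 2 → ℝ) (MvPolynomial.pderiv 0 f₂)) + μ * a ∧
       β₂ = lam₁ * (-MvPolynomial.eval (0 : Fin 2 → ℝ) (MvPolynomial.pderiv 1 f₁)) +
            lam₂ * (-MvPolynomial.eval (0 : Fin 2 → ℝ) (MvPolynomial.pderiv 1 f₂)) + μ * b ∧
       β₃ = lam₁ + lam₂) ∧
      0 < lam₁ ∧ 0 < lam₂) :
    ∃ ε : ℝ, 0 < ε ∧ ∀ p ∈ B, ‖p‖ < ε → ∀ w, IsMetricProj A p w → w ∈ C := by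
  subst hA hB hC
  obtain ⟨c, -, rfl, rfl⟩ := hpar
  obtain ⟨lam₁, lam₂, μ, hβ, hlam₁, hlam₂⟩ := hsol
  have hcont : ∀ᶠ s in 𝓝 0, ContinuousAt (fun s => e3 (φ₁ s) (φ₂ s) (φ₃ s)) s := by
    filter_upwards [hφa₁.eventually_continuousAt, hφa₂.eventually_continuousAt,
      hφa₃.eventually_continuousAt] with s using continuousAt_e3
  have hproj := stmt10_general
    (Fin.forall_fin_two.2 ⟨convexOn_epigraphConstraint hconv₁, convexOn_epigraphConstraint hconv₂⟩)
    (fun i => (contDiff_epigraphConstraint _).contDiffAt) hcont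
    (isLittleO_e3_sub_sub hexp₁ hexp₂ hexp₃)
    (hφC.mono fun s => forall_epigraphConstraint_eq_zero_iff.2)
    (span_insert_gradient_epigraphConstraint_eq_top hLI)
    (e3_eq_smul_sub_sum_gradient_epigraphConstraint hβ) (Fin.forall_fin_two.2 ⟨hlam₁, hlam₂⟩)
  simp only [forall_epigraphConstraint_nonpos_iff, forall_epigraphConstraint_eq_zero_iff] at hproj
  refine exists_pos_forall_mem_range_smul_of_eventually ?_ hproj
  exact Submodule.mem_span_singleton.2 ⟨c, by rw [smul_e3, mul_zero]⟩
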